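/- arXiv:2209.04379 — 2 statements merged into one kernel-verified Lean document; each statement's English description precedes it below -/
import Mathlib

section
/- (Corollary 1.) Let n ≥ 1, let s : Fin n → ℕ be monotone with s i ≥ 1, let p : Fin n → ℝ with p i ≥ 0, and let c : ℝ with c ≥ 1. Then there exists a padding scheme f* : Fin n → ℕ with s i ≤ f* i and (f* i : ℝ) ≤ c * s i for all i, such that every value of f* lies in the range of s, and such that for every padding scheme f : Fin n → ℕ satisfying the same constraints (s i ≤ f i ≤ c·s i), the vulnerability of f* is at most the vulnerability of f. In other words, a vulnerability-minimizing (equivalently, Rényi-min-entropy-leakage-minimizing) padding scheme exists that pads each file to the size of some file in the initial set. -/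
/-- The vulnerability of a deterministic scheme `f` with weights `p`:
the sum, over the values `y` in the image of `f`, of the maximum of `p i` over
the preimage `{i | f i = y}`. -/
noncomputable def vuln {α β : Type*} [Fintype α] [DecidableEq β]
    (p : α → ℝ) (f : α → β) : ℝ :=
  ∑ y ∈ (Finset.univ.image f).attach,
    (Finset.univ.filter (fun i => f i = y.1)).sup'
      (by
        obtain ⟨i, -, hi⟩ := Finset.mem_image.mp y.2
        exact ⟨i, Finset.mem_filter.mpr ⟨Finset.mem_univ i, hi⟩⟩) p

/-!
For nonnegative weights, the vulnerability of `f` is the largest total weight of a set on which `f`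
is injective. A set on which `g = h ∘ f` is injective is one on which `f` is injective, so merging
fibers never increases vulnerability. Lowering each value of a padding scheme to the largest size
in its fiber merges fibers, keeps the scheme above `s` and only decreases it. Hence any scheme is
matched by one with values in the range of `s`, and there are finitely many of those to minimize
over.
-/

section Vulnerability

variable {α β γ : Type*} [Fintype α] [DecidableEq β] [DecidableEq γ] {p : α → ℝ} {f : α → β}

theorem sum_le_vuln_of_injOn (hp : 0 ≤ p) {T : Finset α} (hT : Set.InjOn f T) :
    ∑ i ∈ T, p i ≤ vuln p f := by
  classical
  let e (i : α) : Finset.univ.image f := ⟨f i, Finset.mem_image_of_mem f (Finset.mem_univ i)⟩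
  have he : Set.InjOn e T := Set.InjOn.of_comp (g := Subtype.val) hT
  let maxWeight (y : Finset.univ.image f) : ℝ :=
    (Finset.univ.filter (fun i => f i = y)).sup' (Finset.fiber_nonempty_iff_mem_image.mpr y.2) p
  have le_maxWeight (y : Finset.univ.image f) (i : α) (hi : f i = y) : p i ≤ maxWeight y :=
    Finset.le_sup' p (Finset.mem_filter.mpr ⟨Finset.mem_univ i, hi⟩)
  have maxWeight_nonneg (y : Finset.univ.image f) : 0 ≤ maxWeight y := by
    obtain ⟨i, -, hi⟩ := Finset.mem_image.mp y.2
    exact (hp i).trans (le_maxWeight y i hi)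
  calc
    ∑ i ∈ T, p i ≤ ∑ i ∈ T, maxWeight (e i) :=
      Finset.sum_le_sum fun i _ => le_maxWeight (e i) i rfl
    _ = ∑ y ∈ T.image e, maxWeight y := (Finset.sum_image he).symm
    _ ≤ vuln p f :=
      Finset.sum_le_sum_of_subset_of_nonneg (fun y _ => Finset.mem_attach _ y)
        fun y _ _ => maxWeight_nonneg y

theorem exists_injOn_sum_eq_vuln (p : α → ℝ) (f : α → β) :
    ∃ T : Finset α, Set.InjOn f T ∧ ∑ i ∈ T, p i = vuln p f := by
  classical
  choose k hk hpk using fun y : Finset.univ.image f =>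
    Finset.exists_mem_eq_sup' (s := Finset.univ.filter (fun i => f i = y))
      (Finset.fiber_nonempty_iff_mem_image.mpr y.2) p
  have hfk : f ∘ k = Subtype.val := funext fun y => (Finset.mem_filter.mp (hk y)).2
  have hfk_inj : Function.Injective (f ∘ k) := hfk ▸ Subtype.val_injective
  refine ⟨(Finset.univ.image f).attach.image k, ?_, ?_⟩
  · rw [Finset.coe_image]
    exact hfk_inj.injOn.image_of_comp
  · rw [Finset.sum_image hfk_inj.of_comp.injOn]
    exact Finset.sum_congr rfl fun y _ => (hpk y).symm

theorem vuln_le_vuln_of_factorsThrough {g : α → γ} (hp : 0 ≤ p) (hgf : g.FactorsThrough f) :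
    vuln p g ≤ vuln p f := by
  obtain ⟨T, hgT, hT⟩ := exists_injOn_sum_eq_vuln p g
  have hfT : Set.InjOn f T := fun i hi j hj hij => hgT hi hj (hgf hij)
  exact hT.symm.trans_le (sum_le_vuln_of_injOn hp hfT)

end Vulnerability

section FiberMax

variable {α β γ : Type*} [Fintype α] [DecidableEq β]

/-- The scheme that pads each file to the largest size in its fiber under `f`, the least common size
to which the whole fiber can be padded. -/
def fiberMax [SemilatticeSup γ] (s : α → γ) (f : α → β) (i : α) : γ :=
  (Finset.univ.filter (fun j => f j = f i)).sup' ⟨i, by simp⟩ s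

theorem le_fiberMax [SemilatticeSup γ] (s : α → γ) (f : α → β) : s ≤ fiberMax s f :=
  fun _ => Finset.le_sup' s (by simp)

theorem fiberMax_le [SemilatticeSup β] {s f : α → β} (h : s ≤ f) : fiberMax s f ≤ f :=
  fun _ => Finset.sup'_le _ _ fun j hj => (h j).trans_eq (Finset.mem_filter.mp hj).2

theorem fiberMax_factorsThrough [SemilatticeSup γ] (s : α → γ) (f : α → β) :
    (fiberMax s f).FactorsThrough f :=
  fun _ _ h => by simp only [fiberMax, h]

theorem range_fiberMax_subset [LinearOrder γ] (s : α → γ) (f : α → β) :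
    Set.range (fiberMax s f) ⊆ Set.range s := by
  rintro _ ⟨i, rfl⟩
  obtain ⟨j, -, hj⟩ := Finset.exists_mem_eq_sup' (s := Finset.univ.filter (fun j => f j = f i))
    ⟨i, by simp⟩ s
  exact ⟨j, hj.symm⟩

end FiberMax

theorem cor1_optimal_scheme_in_range_general {α β : Type*} [Fintype α] [LinearOrder β]
    {s : α → β} {A : Set (α → β)} (hA : IsLowerSet A) (hsA : s ∈ A)
    {p : α → ℝ} (hp : 0 ≤ p) :
    ∃ fstar ∈ A, s ≤ fstar ∧ Set.range fstar ⊆ Set.range s ∧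
      ∀ f ∈ A, s ≤ f → vuln p fstar ≤ vuln p f := by
  let candidates : Set (α → β) := {f | f ∈ A ∧ s ≤ f ∧ Set.range f ⊆ Set.range s}
  have hfinite : candidates.Finite :=
    (Set.Finite.pi' fun _ => Set.finite_range s).subset
      fun _ hf i => hf.2.2 (Set.mem_range_self i)
  have hnonempty : candidates.Nonempty := ⟨s, hsA, le_rfl, subset_rfl⟩
  obtain ⟨fstar, ⟨hstarA, hsstar, hrange⟩, hmin⟩ :=
    Set.exists_min_image candidates (vuln p) hfinite hnonempty
  refine ⟨fstar, hstarA, hsstar, hrange, fun f hfA hsf => ?_⟩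
  calc
    vuln p fstar ≤ vuln p (fiberMax s f) :=
      hmin _ ⟨hA (fiberMax_le hsf) hfA, le_fiberMax s f, range_fiberMax_subset s f⟩
    _ ≤ vuln p f := vuln_le_vuln_of_factorsThrough hp (fiberMax_factorsThrough s f)

/-- Corollary 1: there exists a vulnerability-minimizing padding scheme that pads
each file to the size of some file in the initial set. -/
theorem cor1_optimal_scheme_in_range (n : ℕ) (hn : 1 ≤ n)
    (s : Fin n → ℕ) (hmono : Monotone s) (hs : ∀ i, 1 ≤ s i)
    (p : Fin n → ℝ) (hp : ∀ i, 0 ≤ p i)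
    (c : ℝ) (hc : 1 ≤ c) :
    ∃ fstar : Fin n → ℕ,
      (∀ i, s i ≤ fstar i ∧ (fstar i : ℝ) ≤ c * s i) ∧
      (∀ i, fstar i ∈ Set.range s) ∧
      ∀ f : Fin n → ℕ, (∀ i, s i ≤ f i ∧ (f i : ℝ) ≤ c * s i) →
        vuln p fstar ≤ vuln p f := by
  obtain ⟨fstar, hupper, hlower, hrange, hmin⟩ :=
    cor1_optimal_scheme_in_range_general (s := s) (A := {f | ∀ i, (f i : ℝ) ≤ c * s i})
      (fun _ _ hgf hf i => (Nat.cast_le.mpr (hgf i)).trans (hf i))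
      (fun i => le_mul_of_one_le_left (Nat.cast_nonneg _) hc) hp
  exact ⟨fstar, fun i => ⟨hlower i, hupper i⟩, fun i => hrange (Set.mem_range_self i),
    fun f hf => hmin f (fun i => (hf i).2) fun i => (hf i).1⟩
end

section
/- (Decomposition underlying the PopRe dynamic program.) Let n, m ≥ 1, let p : Fin n → ℝ with p i ≥ 0, and let l, r : Fin n → Fin m with l i ≤ r i for all i. Fix a column k : Fin m and suppose the set E = {i | l i ≤ k ∧ k ≤ r i} is nonempty; let A = {i | r i < k} and B = {i | k < l i} (so Fin n is partitioned into E, A, B). Then the minimum, over all feasible schemes f : Fin n → Fin m (l i ≤ f i ≤ r i) such that f i = k for every i ∈ E, of V(f) = ∑_{j} max{p i | f i = j}, equals (max over i ∈ E of p i) + D(A) + D(B), where for a subset S ⊆ Fin n, D(S) denotes the minimum over all feasible schemes g of ∑_{j : Fin m} max{p i | i ∈ S ∧ g i = j} (maxima over empty sets taken to be 0). (Padding all eligible files to column k contributes exactly the maximal eligible frequency, and the remaining files split into two independent subproblems using disjoint sets of columns.) -/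
/-- The vulnerability of a deterministic scheme `h : Fin n → Fin m` with
frequencies `p`: `∑_j max {p i | h i = j}`, the maximum of the empty set taken
to be `0`. -/
noncomputable def V {n m : ℕ} (p : Fin n → ℝ) (h : Fin n → Fin m) : ℝ :=
  ∑ j : Fin m, (Finset.univ.filter (fun i => h i = j)).fold max 0 p

/-- The partial vulnerability of a scheme `g`, counting only files in the set `S`:
`∑_j max {p i | i ∈ S ∧ g i = j}` (maxima of empty sets taken to be `0`). -/
noncomputable def Vpart {n m : ℕ} (p : Fin n → ℝ) (S : Fin n → Prop) [DecidablePred S]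
    (g : Fin n → Fin m) : ℝ :=
  ∑ j : Fin m, (Finset.univ.filter (fun i => S i ∧ g i = j)).fold max 0 p

/-!
In a scheme sending every eligible file to column `k`, the eligible files fill column `k`, the
files with `r i < k` lie strictly to its left and those with `k < l i` strictly to its right.
Vulnerability is additive over sets of files that share no column, so it splits into the three
contributions; and a feasible choice on the left can be glued to any feasible choice on the right,
so the last two are minimized independently.
-/

open Finset

section Vulnerability

variable {ι κ R : Type*} [Fintype κ] [DecidableEq κ] [AddCommMonoid R] [LinearOrder R]

/-- The vulnerability `∑ j, max {p i | i ∈ s ∧ f i = j}` of the scheme `f` on the files in `s`, for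
arbitrary types of files, columns and frequencies. As in `V` and `Vpart`, each maximum also
includes `0`. -/
def vulnerability (p : ι → R) (s : Finset ι) (f : ι → κ) : R :=
  ∑ j, {i ∈ s | f i = j}.fold max 0 p

variable {p : ι → R} {s t : Finset ι} {f g : ι → κ}

theorem vulnerability_congr (h : ∀ i ∈ s, f i = g i) :
    vulnerability p s f = vulnerability p s g := by
  refine sum_congr rfl fun j _ => congrArg (Finset.fold max 0 p) ?_
  exact filter_congr fun i hi => by rw [h i hi]

theorem vulnerability_eq_fold_max {k : κ} (h : ∀ i ∈ s, f i = k) :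
    vulnerability p s f = s.fold max 0 p := by
  rw [vulnerability, sum_eq_single_of_mem k (mem_univ k), filter_true_of_mem h]
  intro j _ hj
  rw [filter_false_of_mem fun i hi hij => hj (hij.symm.trans (h i hi)), fold_empty]

theorem vulnerability_union [DecidableEq ι] (h : ∀ i ∈ s, ∀ i' ∈ t, f i ≠ f i') :
    vulnerability p (s ∪ t) f = vulnerability p s f + vulnerability p t f := by
  simp only [vulnerability, ← sum_add_distrib, filter_union]
  refine sum_congr rfl fun j _ => ?_
  by_cases hs : ∃ i ∈ s, f i = j
  · obtain ⟨i, hi, rfl⟩ := hs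
    have ht : {i' ∈ t | f i' = f i} = ∅ := filter_false_of_mem fun i' hi' => (h i hi i' hi').symm
    rw [ht, union_empty, fold_empty, add_zero]
  · have hs' : {i ∈ s | f i = j} = ∅ := filter_false_of_mem fun i hi hij => hs ⟨i, hi, hij⟩
    rw [hs', empty_union, fold_empty, zero_add]

end Vulnerability

theorem fold_max_eq_of_isGreatest {ι R : Type*} [LinearOrder R] {p : ι → R} {s : Finset ι} {a b : R}
    (ha : IsGreatest (p '' s) a) (hb : b ≤ a) : s.fold max b p = a := by
  obtain ⟨⟨i, hi, hia⟩, hub⟩ := ha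
  refine le_antisymm ((fold_max_le a).2 ⟨hb, fun x hx => hub ⟨x, hx, rfl⟩⟩) ?_
  exact (le_fold_max a).2 (Or.inr ⟨i, hi, hia.ge⟩)

section PaddedSchemes

variable {ι κ : Type*}

/-- The feasible schemes padding every eligible file to column `k`. Feasibility is membership in
the interval `[l, r]` of the pointwise order on schemes. -/
def paddedSchemes [Preorder κ] (l r : ι → κ) (k : κ) : Set (ι → κ) :=
  {f ∈ Set.Icc l r | ∀ i, l i ≤ k → k ≤ r i → f i = k}

theorem exists_mem_paddedSchemes_glue [Preorder κ] {l r gA gB : ι → κ} (k : κ)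
    (hA : gA ∈ Set.Icc l r) (hB : gB ∈ Set.Icc l r) :
    ∃ f ∈ paddedSchemes l r k, (∀ i, r i < k → f i = gA i) ∧ ∀ i, k < l i → f i = gB i := by
  classical
  let f : ι → κ := fun i =>
    if l i ≤ k ∧ k ≤ r i then k else if k < l i then gB i else gA i
  have hf : f ∈ Set.Icc l r := by
    refine Set.mem_Icc.2 ⟨fun i => ?_, fun i => ?_⟩ <;> dsimp only [f] <;> split_ifs with hE
    exacts [hE.1, hB.1 i, hA.1 i, hE.2, hB.2 i, hA.2 i]
  have h_below (i : ι) (hi : r i < k) : f i = gA i := by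
    have hlk : l i < k := ((hA.1 i).trans (hA.2 i)).trans_lt hi
    exact (if_neg fun hE => hi.not_ge hE.2).trans (if_neg hlk.asymm)
  have h_above (i : ι) (hi : k < l i) : f i = gB i :=
    (if_neg fun hE => hi.not_ge hE.1).trans (if_pos hi)
  exact ⟨f, ⟨hf, fun i hl hr => if_pos ⟨hl, hr⟩⟩, h_below, h_above⟩

variable {R : Type*} [Fintype ι] [Fintype κ] [LinearOrder κ] [AddCommMonoid R] [LinearOrder R]
  {l r : ι → κ} {k : κ}

theorem vulnerability_of_mem_paddedSchemes (p : ι → R) {f : ι → κ}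
    (hf : f ∈ paddedSchemes l r k) :
    vulnerability p univ f = ({i | l i ≤ k ∧ k ≤ r i} : Finset ι).fold max 0 p
      + vulnerability p {i | r i < k} f + vulnerability p {i | k < l i} f := by
  classical
  obtain ⟨⟨hl, hr⟩, hk⟩ := hf
  let E : Finset ι := {i | l i ≤ k ∧ k ≤ r i}
  let A : Finset ι := {i | r i < k}
  let B : Finset ι := {i | k < l i}
  have h_cover : univ = E ∪ A ∪ B := by
    ext i
    simp only [E, A, B, mem_univ, mem_union, mem_filter_univ, true_iff]
    grind
  have h_eligible : ∀ i ∈ E, f i = k := fun i hi =>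
    have hi := (mem_filter_univ i).1 hi
    hk i hi.1 hi.2
  have h_below : ∀ i ∈ A, f i < k := fun i hi => (hr i).trans_lt ((mem_filter_univ i).1 hi)
  have h_above : ∀ i ∈ B, k < f i := fun i hi => ((mem_filter_univ i).1 hi).trans_le (hl i)
  have h_not_above : ∀ i ∈ E ∪ A, f i ≤ k := fun i hi =>
    (mem_union.1 hi).elim (fun hi => (h_eligible i hi).le) fun hi => (h_below i hi).le
  calc vulnerability p univ f
      = vulnerability p (E ∪ A) f + vulnerability p B f := by
        rw [h_cover, vulnerability_union fun i hi i' hi' =>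
          ((h_not_above i hi).trans_lt (h_above i' hi')).ne]
    _ = vulnerability p E f + vulnerability p A f + vulnerability p B f := by
        rw [vulnerability_union fun i hi i' hi' =>
          ((h_below i' hi').trans_eq (h_eligible i hi).symm).ne']
    _ = E.fold max 0 p + vulnerability p A f + vulnerability p B f := by
        rw [vulnerability_eq_fold_max h_eligible]

theorem popRe_decomposition_general [IsOrderedAddMonoid R] (p : ι → R) {dA dB : R}
    (hdA : IsLeast (vulnerability p {i | r i < k} '' Set.Icc l r) dA)
    (hdB : IsLeast (vulnerability p {i | k < l i} '' Set.Icc l r) dB) :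
    IsLeast (vulnerability p univ '' paddedSchemes l r k)
      (({i | l i ≤ k ∧ k ≤ r i} : Finset ι).fold max 0 p + dA + dB) := by
  constructor
  · obtain ⟨gA, hgA, rfl⟩ := hdA.1
    obtain ⟨gB, hgB, rfl⟩ := hdB.1
    obtain ⟨f, hf, hfA, hfB⟩ := exists_mem_paddedSchemes_glue k hgA hgB
    have hA : vulnerability p {i | r i < k} f = vulnerability p {i | r i < k} gA :=
      vulnerability_congr fun i hi => hfA i ((mem_filter_univ i).1 hi)
    have hB : vulnerability p {i | k < l i} f = vulnerability p {i | k < l i} gB :=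
      vulnerability_congr fun i hi => hfB i ((mem_filter_univ i).1 hi)
    exact ⟨f, hf, by rw [vulnerability_of_mem_paddedSchemes p hf, hA, hB]⟩
  · rintro _ ⟨f, hf, rfl⟩
    rw [vulnerability_of_mem_paddedSchemes p hf]
    gcongr
    exacts [hdA.2 ⟨f, hf.1, rfl⟩, hdB.2 ⟨f, hf.1, rfl⟩]

end PaddedSchemes

section FinSchemes

variable {n m : ℕ} (p : Fin n → ℝ) (l r : Fin n → Fin m)

theorem setOf_V_eq_image (k : Fin m) :
    {x : ℝ | ∃ f : Fin n → Fin m,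
      (∀ i, l i ≤ f i ∧ f i ≤ r i) ∧ (∀ i, l i ≤ k → k ≤ r i → f i = k) ∧ x = V p f} =
      vulnerability p univ '' paddedSchemes l r k := by
  have hV : V p = vulnerability p univ (κ := Fin m) := rfl
  ext x
  simp only [paddedSchemes, hV, Set.mem_image, Set.mem_ofPred_eq, Set.mem_Icc, Pi.le_def,
    forall_and, and_assoc, eq_comm (a := x)]

theorem setOf_Vpart_eq_image (S : Fin n → Prop) [DecidablePred S] :
    {x : ℝ | ∃ g : Fin n → Fin m, (∀ i, l i ≤ g i ∧ g i ≤ r i) ∧ x = Vpart p S g} =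
      vulnerability p {i | S i} '' Set.Icc l r := by
  have hV : Vpart p S = vulnerability p {i | S i} (κ := Fin m) := by
    funext g
    simp only [Vpart, vulnerability, filter_filter]
  ext x
  simp only [hV, Set.mem_image, Set.mem_ofPred_eq, Set.mem_Icc, Pi.le_def, forall_and,
    eq_comm (a := x)]

end FinSchemes

/-- Decomposition underlying the `PopRe` dynamic program: the minimal vulnerability over
feasible schemes padding every eligible file to column `k` equals the maximal eligible
frequency plus the minimal partial vulnerabilities of the two independent subproblems
for the files below and above column `k`. -/
theorem popRe_decomposition (n m : ℕ) (hn : 0 < n) (hm : 0 < m)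
    (p : Fin n → ℝ) (hp : ∀ i, 0 ≤ p i)
    (l r : Fin n → Fin m) (hlr : ∀ i, l i ≤ r i)
    (k : Fin m) (hE : ∃ i, l i ≤ k ∧ k ≤ r i)
    (pE : ℝ) (hpE : IsGreatest {x : ℝ | ∃ i, (l i ≤ k ∧ k ≤ r i) ∧ p i = x} pE)
    (dA : ℝ)
    (hdA : IsLeast {x : ℝ | ∃ g : Fin n → Fin m,
        (∀ i, l i ≤ g i ∧ g i ≤ r i) ∧ x = Vpart p (fun i => r i < k) g} dA)
    (dB : ℝ)
    (hdB : IsLeast {x : ℝ | ∃ g : Fin n → Fin m,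
        (∀ i, l i ≤ g i ∧ g i ≤ r i) ∧ x = Vpart p (fun i => k < l i) g} dB) :
    IsLeast {x : ℝ | ∃ f : Fin n → Fin m,
        (∀ i, l i ≤ f i ∧ f i ≤ r i) ∧ (∀ i, l i ≤ k → k ≤ r i → f i = k) ∧ x = V p f}
      (pE + dA + dB) := by
  have h_max : ({i | l i ≤ k ∧ k ≤ r i} : Finset (Fin n)).fold max 0 p = pE := by
    obtain ⟨i, -, hi⟩ := hpE.1
    refine fold_max_eq_of_isGreatest ?_ (hi ▸ hp i)
    simpa only [Set.image, mem_coe, mem_filter_univ] using hpE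
  simp only [setOf_Vpart_eq_image] at hdA hdB
  rw [setOf_V_eq_image, ← h_max]
  exact popRe_decomposition_general p hdA hdB
end
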